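/- Let n ≥ 2, q = exp(2πi/n), and ℏ ∈ ℂ. Then the bilinear product ⋆ defined on the space of functions F : ℤ/nℤ → ℂ[z,w] by (F ⋆ G)(m) = Σ_{j=0}^{n−1} Σ_{k,l ∈ ℤ/nℤ, k+l+j ≡ m} ((iℏ/2)^j/[j]_q!) · D_z^j(F(k)) · σ^j( D_w^j( γ^k(G(l)) ) ) is associative. -/

import Mathlib

noncomputable section

/-- The `q`-integer `[k]_q = 1 + q + ⋯ + q^(k-1)`. -/
def qint (q : ℂ) (k : ℕ) : ℂ := ∑ i ∈ Finset.range k, q ^ i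

/-- The `q`-factorial `[k]_q! = ∏_{i=1}^k [i]_q`. -/
def qfact (q : ℂ) (k : ℕ) : ℂ := ∏ i ∈ Finset.range k, qint q (i + 1)

/-- The polynomial algebra `A = ℂ[z,w]`, realized as `ℂ[w][z]` (outer variable `z`,
inner variable `w`). -/
abbrev PolyZW : Type := Polynomial (Polynomial ℂ)

/-- The algebra automorphism `σ` of `ℂ[z,w]`: `z ↦ q z`, `w ↦ w`. -/
def sigmaOp (q : ℂ) (f : PolyZW) : PolyZW :=
  f.comp (Polynomial.C (Polynomial.C q) * Polynomial.X)

/-- The algebra automorphism `τ` of `ℂ[z,w]`: `z ↦ z`, `w ↦ q⁻¹ w`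
(applied to each `z`-coefficient). -/
def tauOp (q : ℂ) (f : PolyZW) : PolyZW :=
  f.sum fun n p => Polynomial.C (p.comp (Polynomial.C q⁻¹ * Polynomial.X)) * Polynomial.X ^ n

/-- The automorphism `γ = σ ∘ τ` of `ℂ[z,w]`: `z ↦ q z`, `w ↦ q⁻¹ w`. -/
def gammaOp (q : ℂ) (f : PolyZW) : PolyZW := sigmaOp q (tauOp q f)

/-- The twisted difference operator `D_z f = (f - σ f)/((1-q) z)`; the division by `z` is
exact since `f - σ f` is divisible by `z`. -/
def Dz (q : ℂ) (f : PolyZW) : PolyZW :=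
  Polynomial.C (Polynomial.C (1 - q)⁻¹) * (f - sigmaOp q f).divX

/-- The twisted difference operator `D_w f = (f - τ f)/((1-q⁻¹) w)`; the division by `w` is
exact and performed on each `z`-coefficient. -/
def Dw (q : ℂ) (f : PolyZW) : PolyZW :=
  (f - tauOp q f).sum fun n p =>
    Polynomial.C (Polynomial.C (1 - q⁻¹)⁻¹ * p.divX) * Polynomial.X ^ n

/-- The star product on functions `ℤ/nℤ → ℂ[z,w]` (the underlying space of the complexified
crossed product `S(ℝ²)⋊ℤ_n`):
`(F ⋆ G)(m) = ∑_{j=0}^{n-1} ∑_{k+l+j ≡ m} ((iℏ/2)^j/[j]_q!) D_z^j(F(k)) σ^j(D_w^j(γ^k(G(l))))`. -/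
def qstar (n : ℕ) (hbar q : ℂ) (F G : ZMod n → PolyZW) : ZMod n → PolyZW :=
  fun m =>
    ∑ j ∈ Finset.range n, ∑ k ∈ Finset.range n,
      ((Complex.I * hbar / 2) ^ j / qfact q j) •
        ((Dz q)^[j] (F (k : ZMod n)) *
          (sigmaOp q)^[j] ((Dw q)^[j] ((gammaOp q)^[k]
            (G ((m : ZMod n) - (k : ZMod n) - (j : ZMod n))))))

/-!
Let `μ` be the undeformed product of the crossed product `ℂ[z,w] ⋊ ℤ/n`. Moving `D_w` past `γ^k`
rewrites the star product as `F ⋆ G = μ (exp_q (D ⊗ E) (F ⊗ G))`, where `D` and `E` are commuting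
operators with `D ^ n = E ^ n = 0` built from `D_z` and `σ ∘ D_w`. With `S` built from `σ`, they
satisfy the skew Leibniz rules `D (FG) = D F · S G + F · D G` and `E (FG) = E F · G + S F · E G`,
as well as `D S = q S D` and `E S = q S E`. The two bracketings of a triple product then come from
`exp_q (D ⊗ S ⊗ E + 1 ⊗ D ⊗ E) exp_q (D ⊗ E ⊗ 1)` and
`exp_q (D ⊗ S ⊗ E + D ⊗ E ⊗ 1) exp_q (1 ⊗ D ⊗ E)`. Since `exp_q (x + y) = exp_q x · exp_q y`
whenever `y x = q x y`, both split off `exp_q (D ⊗ S ⊗ E)`, leaving two factors that commute.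
-/

section TruncatedQExponential

open Finset

theorem qint_zero (q : ℂ) : qint q 0 = 0 := sum_range_zero _

theorem qint_add (q : ℂ) (a b : ℕ) : qint q (a + b) = qint q a + q ^ a * qint q b := by
  simp only [qint, sum_range_add, mul_sum, pow_add]

theorem qfact_zero (q : ℂ) : qfact q 0 = 1 := prod_range_zero _

theorem qfact_succ (q : ℂ) (k : ℕ) : qfact q (k + 1) = qfact q k * qint q (k + 1) :=
  prod_range_succ _ _

theorem qfact_dvd_qfact (q : ℂ) {j k : ℕ} (h : j ≤ k) : qfact q j ∣ qfact q k :=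
  prod_dvd_prod_of_subset _ _ _ (range_subset_range.mpr h)

theorem qint_mul_inv_qfact_succ {q : ℂ} {k : ℕ} (h : qfact q (k + 1) ≠ 0) :
    qint q (k + 1) * (qfact q (k + 1))⁻¹ = (qfact q k)⁻¹ := by
  rw [qfact_succ] at h ⊢
  have hint : qint q (k + 1) ≠ 0 := right_ne_zero_of_mul h
  rw [mul_inv, mul_left_comm, mul_inv_cancel₀ hint, mul_one]

theorem qfact_ne_zero_of_isPrimitiveRoot {q : ℂ} {n j : ℕ} (hq : IsPrimitiveRoot q n)
    (hj : j < n) : qfact q j ≠ 0 := by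
  refine prod_ne_zero_iff.mpr fun i hi hint => ?_
  have hi : i < j := mem_range.mp hi
  have hgeom : qint q (i + 1) * (q - 1) = q ^ (i + 1) - 1 := geom_sum_mul q (i + 1)
  rw [hint, zero_mul] at hgeom
  exact hq.pow_ne_one_of_pos_of_lt i.succ_ne_zero (by omega) (sub_eq_zero.mp hgeom.symm)

theorem sum_antidiagonal_qPascal {M : Type*} [AddCommMonoid M] [Module ℂ M] {q : ℂ} {r : ℕ}
    (hr : qfact q (r + 1) ≠ 0) (T : ℕ → ℕ → M) :
    ∑ p ∈ antidiagonal r, ((qfact q p.1)⁻¹ * (qfact q p.2)⁻¹) •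
        (T (p.1 + 1) p.2 + q ^ p.1 • T p.1 (p.2 + 1)) =
      qint q (r + 1) • ∑ p ∈ antidiagonal (r + 1),
        ((qfact q p.1)⁻¹ * (qfact q p.2)⁻¹) • T p.1 p.2 := by
  have hinv {k : ℕ} (hk : k ≤ r) : (qfact q k)⁻¹ = qint q (k + 1) * (qfact q (k + 1))⁻¹ :=
    (qint_mul_inv_qfact_succ
      (ne_zero_of_dvd_ne_zero hr (qfact_dvd_qfact q (Nat.succ_le_succ hk)))).symm
  let term (c : ℂ) (a b : ℕ) : M := (c * (qfact q a)⁻¹ * (qfact q b)⁻¹) • T a b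
  have hleft : ∑ p ∈ antidiagonal r, term (qint q (p.1 + 1)) (p.1 + 1) p.2 =
      ∑ p ∈ antidiagonal (r + 1), term (qint q p.1) p.1 p.2 := by
    simp [Nat.sum_antidiagonal_succ, term, qint_zero]
  have hright : ∑ p ∈ antidiagonal r, term (q ^ p.1 * qint q (p.2 + 1)) p.1 (p.2 + 1) =
      ∑ p ∈ antidiagonal (r + 1), term (q ^ p.1 * qint q p.2) p.1 p.2 := by
    simp [Nat.sum_antidiagonal_succ', term, qint_zero]
  calc _ = ∑ p ∈ antidiagonal r, (term (qint q (p.1 + 1)) (p.1 + 1) p.2 +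
            term (q ^ p.1 * qint q (p.2 + 1)) p.1 (p.2 + 1)) := by
        refine sum_congr rfl fun p hp => ?_
        have hp : p.1 + p.2 = r := mem_antidiagonal.mp hp
        rw [smul_add, smul_smul]
        congr 2
        · rw [hinv (k := p.1) (by omega)]
        · rw [hinv (k := p.2) (by omega)]
          ring
    _ = ∑ p ∈ antidiagonal (r + 1), term (qint q p.1 + q ^ p.1 * qint q p.2) p.1 p.2 := by
        simp only [sum_add_distrib, hleft, hright, term, add_mul, add_smul]
    _ = _ := by
        rw [smul_sum]
        refine sum_congr rfl fun p hp => ?_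
        rw [← qint_add, mem_antidiagonal.mp hp, smul_smul, ← mul_assoc]

variable {R : Type*} [Semiring R] [Algebra ℂ R] {q : ℂ} {x y : R}

theorem mul_pow_of_mul_eq_smul (hyx : y * x = q • (x * y)) (a : ℕ) :
    y * x ^ a = q ^ a • (x ^ a * y) := by
  induction a with
  | zero => simp
  | succ a ih =>
    rw [pow_succ, ← mul_assoc, ih, smul_mul_assoc, mul_assoc, hyx, mul_smul_comm, smul_smul,
      ← mul_assoc, ← pow_succ, ← pow_succ]

theorem inv_qfact_smul_add_pow (hyx : y * x = q • (x * y)) {r : ℕ} (hr : qfact q r ≠ 0) :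
    (qfact q r)⁻¹ • (x + y) ^ r =
      ∑ p ∈ antidiagonal r, ((qfact q p.1)⁻¹ * (qfact q p.2)⁻¹) • (x ^ p.1 * y ^ p.2) := by
  induction r with
  | zero => simp [qfact_zero]
  | succ r ih =>
    obtain ⟨hfact, hint⟩ := mul_ne_zero_iff.mp (qfact_succ q r ▸ hr)
    have hmul (a b : ℕ) :
        (x + y) * (x ^ a * y ^ b) = x ^ (a + 1) * y ^ b + q ^ a • (x ^ a * y ^ (b + 1)) := by
      rw [add_mul, ← mul_assoc, ← mul_assoc, mul_pow_of_mul_eq_smul hyx, smul_mul_assoc,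
        mul_assoc (x ^ a), ← pow_succ', ← pow_succ']
    rw [← smul_right_inj hint, smul_smul, qint_mul_inv_qfact_succ hr, pow_succ', ← mul_smul_comm,
      ih hfact, mul_sum, ← sum_antidiagonal_qPascal hr fun a b => x ^ a * y ^ b]
    simp only [mul_smul_comm, hmul]

theorem sum_range_sum_antidiagonal_of_eq_zero {M : Type*} [AddCommMonoid M] {n : ℕ}
    {T : ℕ → ℕ → M} (hT : ∀ a b, n ≤ a + b → T a b = 0) :
    ∑ r ∈ range n, ∑ p ∈ antidiagonal r, T p.1 p.2 = ∑ a ∈ range n, ∑ b ∈ range n, T a b := by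
  simp only [Nat.sum_antidiagonal_eq_sum_range_succ T]
  rw [sum_range_diag_flip]
  refine sum_congr rfl fun a _ => sum_subset (range_subset_range.mpr (n.sub_le a)) ?_
  intro b _ hb
  exact hT a b (by simp only [mem_range] at hb; omega)

/-- The `q`-exponential series `∑ x ^ j / [j]_q!`, cut off at `j < n` because `[j]_q!` vanishes for
`j ≥ n` when `q` is a primitive `n`-th root of unity. -/
def truncQExp (q : ℂ) (n : ℕ) (x : R) : R := ∑ j ∈ range n, (qfact q j)⁻¹ • x ^ j

theorem truncQExp_add {n : ℕ} (hq : ∀ j < n, qfact q j ≠ 0) (hyx : y * x = q • (x * y))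
    (hxy : ∀ a b, n ≤ a + b → x ^ a * y ^ b = 0) :
    truncQExp q n (x + y) = truncQExp q n x * truncQExp q n y := by
  simp only [truncQExp, sum_mul_sum, smul_mul_smul_comm]
  rw [← sum_range_sum_antidiagonal_of_eq_zero fun a b h => by rw [hxy a b h, smul_zero]]
  exact sum_congr rfl fun r hr => inv_qfact_smul_add_pow hyx (hq r (mem_range.mp hr))

theorem commute_truncQExp (h : Commute x y) (q : ℂ) (n : ℕ) :
    Commute (truncQExp q n x) (truncQExp q n y) :=
  .sum_left _ _ _ fun i _ => .sum_right _ _ _ fun j _ =>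
    ((h.pow_pow i j).smul_left _).smul_right _

theorem map_truncQExp_apply_of_comp_eq {M N : Type*} [AddCommMonoid M] [Module ℂ M]
    [AddCommMonoid N] [Module ℂ N] {X : Module.End ℂ M} {Y : Module.End ℂ N} {φ : M →ₗ[ℂ] N}
    (h : φ ∘ₗ X = Y ∘ₗ φ) (q : ℂ) (n : ℕ) (v : M) :
    φ (truncQExp q n X v) = truncQExp q n Y (φ v) := by
  have hpow (j : ℕ) : φ ((X ^ j) v) = (Y ^ j) (φ v) := by
    simp only [Module.End.pow_apply]
    have hsemi : Function.Semiconj φ X Y := LinearMap.congr_fun h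
    exact hsemi.iterate_right j v
  simp only [truncQExp, LinearMap.sum_apply, LinearMap.smul_apply, map_sum, map_smul, hpow]

end TruncatedQExponential

section TwistedProduct

open TensorProduct

variable {V : Type*} [AddCommMonoid V] [Module ℂ V]

/-- The deformation `(f, g) ↦ ∑ j < n, μ (D ^ j f) (E ^ j g) / [j]_q!` of the product `μ`, that is
`μ ∘ exp_q (D ⊗ E)`. -/
def twistedMul (q : ℂ) (n : ℕ) (μ : V →ₗ[ℂ] V →ₗ[ℂ] V) (D E : Module.End ℂ V) :
    V →ₗ[ℂ] V →ₗ[ℂ] V :=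
  curry (lift μ ∘ₗ truncQExp q n (map D E))

theorem twistedMul_apply (q : ℂ) (n : ℕ) (μ : V →ₗ[ℂ] V →ₗ[ℂ] V) (D E : Module.End ℂ V)
    (f g : V) :
    twistedMul q n μ D E f g =
      ∑ j ∈ Finset.range n, (qfact q j)⁻¹ • μ ((D ^ j) f) ((E ^ j) g) := by
  simp [twistedMul, truncQExp, TensorProduct.map_pow]

/-- The operator `A ⊗ B ⊗ C` on the threefold tensor power of `V`. -/
def mapTriple (A B C : Module.End ℂ V) : Module.End ℂ ((V ⊗[ℂ] V) ⊗[ℂ] V) :=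
  map (map A B) C

theorem mapTriple_mul (A B C A' B' C' : Module.End ℂ V) :
    mapTriple A B C * mapTriple A' B' C' = mapTriple (A * A') (B * B') (C * C') := by
  simp only [mapTriple, TensorProduct.map_mul]

theorem mapTriple_pow (A B C : Module.End ℂ V) (k : ℕ) :
    mapTriple A B C ^ k = mapTriple (A ^ k) (B ^ k) (C ^ k) := by
  simp only [mapTriple, TensorProduct.map_pow]

theorem mapTriple_smul_middle (c : ℂ) (A B C : Module.End ℂ V) :
    mapTriple A (c • B) C = c • mapTriple A B C := by
  simp only [mapTriple, map_smul_left, map_smul_right]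

variable {q : ℂ} {n : ℕ} {μ : V →ₗ[ℂ] V →ₗ[ℂ] V} {D E S : Module.End ℂ V}

theorem twistedMul_twistedMul_left (hD : ∀ f g, D (μ f g) = μ (D f) (S g) + μ f (D g))
    (f g h : V) :
    twistedMul q n μ D E (twistedMul q n μ D E f g) h =
      lift μ (map (lift μ) LinearMap.id (truncQExp q n (mapTriple D S E + mapTriple 1 D E)
        (truncQExp q n (mapTriple D E 1) ((f ⊗ₜ g) ⊗ₜ h)))) := by
  have hinner : (mk ℂ (V ⊗[ℂ] V) V).flip h ∘ₗ map D E =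
      mapTriple D E 1 ∘ₗ (mk ℂ (V ⊗[ℂ] V) V).flip h :=
    TensorProduct.ext' fun _ _ => rfl
  have houter : map (lift μ) LinearMap.id ∘ₗ (mapTriple D S E + mapTriple 1 D E) =
      map D E ∘ₗ map (lift μ) LinearMap.id :=
    ext_threefold fun _ _ _ => by simp [mapTriple, hD, add_tmul]
  have hinner' := map_truncQExp_apply_of_comp_eq hinner q n (f ⊗ₜ g)
  simp only [LinearMap.flip_apply, mk_apply] at hinner'
  rw [map_truncQExp_apply_of_comp_eq houter, ← hinner']
  rfl

theorem twistedMul_twistedMul_right (hμ : ∀ f g h, μ (μ f g) h = μ f (μ g h))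
    (hE : ∀ f g, E (μ f g) = μ (E f) g + μ (S f) (E g)) (f g h : V) :
    twistedMul q n μ D E f (twistedMul q n μ D E g h) =
      lift μ (map (lift μ) LinearMap.id (truncQExp q n (mapTriple D S E + mapTriple D E 1)
        (truncQExp q n (mapTriple 1 D E) ((f ⊗ₜ g) ⊗ₜ h)))) := by
  let assoc := TensorProduct.assoc ℂ V V V
  have hinner : (assoc.symm.toLinearMap ∘ₗ mk ℂ V (V ⊗[ℂ] V) f) ∘ₗ map D E =
      mapTriple 1 D E ∘ₗ assoc.symm.toLinearMap ∘ₗ mk ℂ V (V ⊗[ℂ] V) f :=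
    TensorProduct.ext' fun _ _ => rfl
  have houter : (map LinearMap.id (lift μ) ∘ₗ assoc.toLinearMap) ∘ₗ
        (mapTriple D S E + mapTriple D E 1) =
      map D E ∘ₗ map LinearMap.id (lift μ) ∘ₗ assoc.toLinearMap :=
    ext_threefold fun _ _ _ => by simp [assoc, mapTriple, hE, tmul_add, add_comm]
  have hassoc : lift μ ∘ₗ map (lift μ) LinearMap.id =
      lift μ ∘ₗ map LinearMap.id (lift μ) ∘ₗ assoc.toLinearMap :=
    ext_threefold fun f g h => by simp [assoc, hμ]
  have hinner' := map_truncQExp_apply_of_comp_eq hinner q n (g ⊗ₜ h)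
  have houter' := map_truncQExp_apply_of_comp_eq houter q n
    (assoc.symm (f ⊗ₜ truncQExp q n (map D E) (g ⊗ₜ h)))
  simp only [LinearMap.comp_apply, LinearEquiv.coe_coe, mk_apply] at hinner' houter'
  refine Eq.trans ?_ (LinearMap.congr_fun hassoc _).symm
  simp only [LinearMap.comp_apply, LinearEquiv.coe_coe]
  rw [← assoc_symm_tmul, ← hinner', houter', assoc.apply_symm_apply]
  rfl

theorem twistedMul_assoc (hμ : ∀ f g h, μ (μ f g) h = μ f (μ g h))
    (hq : ∀ j < n, qfact q j ≠ 0)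
    (hD : ∀ f g, D (μ f g) = μ (D f) (S g) + μ f (D g))
    (hE : ∀ f g, E (μ f g) = μ (E f) g + μ (S f) (E g))
    (hDS : D * S = q • (S * D)) (hES : E * S = q • (S * E)) (hDE : Commute D E)
    (hDn : D ^ n = 0) (hEn : E ^ n = 0) (f g h : V) :
    twistedMul q n μ D E (twistedMul q n μ D E f g) h =
      twistedMul q n μ D E f (twistedMul q n μ D E g h) := by
  have hsplit₁ : truncQExp q n (mapTriple D S E + mapTriple 1 D E) =
      truncQExp q n (mapTriple D S E) * truncQExp q n (mapTriple 1 D E) := by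
    refine truncQExp_add hq ?_ fun a b hab => ?_
    · simp only [mapTriple_mul, hDS, mapTriple_smul_middle, one_mul, mul_one]
    · rw [mapTriple_pow, mapTriple_pow, mapTriple_mul, ← pow_add, pow_eq_zero_of_le hab hEn,
        mapTriple, map_zero_right]
  have hsplit₂ : truncQExp q n (mapTriple D S E + mapTriple D E 1) =
      truncQExp q n (mapTriple D S E) * truncQExp q n (mapTriple D E 1) := by
    refine truncQExp_add hq ?_ fun a b hab => ?_
    · simp only [mapTriple_mul, hES, mapTriple_smul_middle, one_mul, mul_one]
    · rw [mapTriple_pow, mapTriple_pow, mapTriple_mul, ← pow_add, pow_eq_zero_of_le hab hDn,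
        mapTriple, map_zero_left, map_zero_left]
  have hcomm : Commute (mapTriple 1 D E) (mapTriple D E 1) := by
    simp only [Commute, SemiconjBy, mapTriple_mul, one_mul, mul_one, hDE.eq]
  rw [twistedMul_twistedMul_left hD, twistedMul_twistedMul_right hμ hE, hsplit₁, hsplit₂]
  simp only [← Module.End.mul_apply, mul_assoc, (commute_truncQExp hcomm q n).eq]

end TwistedProduct

section CrossedProduct

theorem pow_val_natCast {M : Type*} [Monoid M] {n : ℕ} {x : M} (hx : x ^ n = 1) (j : ℕ) :
    x ^ (j : ZMod n).val = x ^ j := by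
  rw [ZMod.val_natCast, ← pow_eq_pow_mod j hx]

theorem pow_val_add {M : Type*} [Monoid M] {n : ℕ} [NeZero n] {x : M} (hx : x ^ n = 1)
    (k l : ZMod n) : x ^ (k + l).val = x ^ k.val * x ^ l.val := by
  rw [ZMod.val_add, ← pow_eq_pow_mod _ hx, pow_add]

theorem inv_pow_eq_one_of_pow_eq_one {M : Type*} [DivisionMonoid M] {n : ℕ} {x : M}
    (hx : x ^ n = 1) : x⁻¹ ^ n = 1 := by
  rw [inv_pow, hx, inv_one]

variable {A : Type*} [Semiring A] [Algebra ℂ A] {n : ℕ}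

/-- The product of the crossed product of `A` by the cyclic group of order `n` acting through the
powers of `γ`: it is determined by `γ^k * a = γ^k(a) * γ^k`. -/
def crossedMul [NeZero n] (γ : A →ₐ[ℂ] A) :
    (ZMod n → A) →ₗ[ℂ] (ZMod n → A) →ₗ[ℂ] ZMod n → A :=
  LinearMap.mk₂ ℂ (fun F G m => ∑ k, F k * (γ ^ k.val) (G (m - k)))
    (fun F F' G => funext fun m => by simp [add_mul, Finset.sum_add_distrib])
    (fun c F G => funext fun m => by simp [Finset.smul_sum])
    (fun F G G' => funext fun m => by simp [mul_add, Finset.sum_add_distrib])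
    (fun c F G => funext fun m => by simp [Finset.smul_sum])

/-- The operator applying `φ` pointwise and scaling the component at `k` by `χ k`. -/
def weightedOp (χ : AddChar (ZMod n) ℂ) (φ : Module.End ℂ A) : Module.End ℂ (ZMod n → A) :=
  LinearMap.pi fun k => χ k • φ ∘ₗ LinearMap.proj k

/-- The operator applying `φ` pointwise and moving the component at `k` to `k + 1`. -/
def shiftOp (n : ℕ) (φ : Module.End ℂ A) : Module.End ℂ (ZMod n → A) :=
  LinearMap.pi fun k => φ ∘ₗ LinearMap.proj (k - 1)

theorem crossedMul_apply [NeZero n] (γ : A →ₐ[ℂ] A) (F G : ZMod n → A) (m : ZMod n) :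
    crossedMul γ F G m = ∑ k, F k * (γ ^ k.val) (G (m - k)) :=
  rfl

theorem weightedOp_apply (χ : AddChar (ZMod n) ℂ) (φ : Module.End ℂ A) (F : ZMod n → A)
    (k : ZMod n) : weightedOp χ φ F k = χ k • φ (F k) :=
  rfl

theorem shiftOp_apply (φ : Module.End ℂ A) (F : ZMod n → A) (k : ZMod n) :
    shiftOp n φ F k = φ (F (k - 1)) :=
  rfl

theorem weightedOp_pow_apply (χ : AddChar (ZMod n) ℂ) (φ : Module.End ℂ A) (j : ℕ)
    (F : ZMod n → A) (k : ZMod n) :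
    (weightedOp χ φ ^ j) F k = χ k ^ j • (φ ^ j) (F k) := by
  induction j with
  | zero => simp
  | succ j ih =>
    rw [pow_succ', Module.End.mul_apply, weightedOp_apply, ih, map_smul, smul_smul, pow_succ',
      pow_succ' φ, Module.End.mul_apply]

theorem shiftOp_pow_apply (φ : Module.End ℂ A) (j : ℕ) (F : ZMod n → A) (k : ZMod n) :
    (shiftOp n φ ^ j) F k = (φ ^ j) (F (k - j)) := by
  induction j generalizing k with
  | zero => simp
  | succ j ih =>
    rw [pow_succ', Module.End.mul_apply, shiftOp_apply, ih, pow_succ' φ, Module.End.mul_apply,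
      Nat.cast_succ, sub_sub, add_comm (1 : ZMod n)]

theorem weightedOp_mul_weightedOp (χ : AddChar (ZMod n) ℂ) {φ θ : Module.End ℂ A} {c : ℂ}
    (h : φ * θ = c • (θ * φ)) :
    weightedOp χ φ * weightedOp χ θ = c • (weightedOp χ θ * weightedOp χ φ) := by
  refine LinearMap.ext fun F => funext fun k => ?_
  have hk : φ (θ (F k)) = c • θ (φ (F k)) := LinearMap.congr_fun h (F k)
  simp only [Module.End.mul_apply, LinearMap.smul_apply, Pi.smul_apply, weightedOp_apply,
    map_smul, hk, smul_smul]
  ring_nf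

theorem shiftOp_mul_weightedOp (χ : AddChar (ZMod n) ℂ) {φ θ : Module.End ℂ A} {c : ℂ}
    (h : φ * θ = (c * χ 1) • (θ * φ)) :
    shiftOp n φ * weightedOp χ θ = c • (weightedOp χ θ * shiftOp n φ) := by
  refine LinearMap.ext fun F => funext fun k => ?_
  have hk : φ (θ (F (k - 1))) = (c * χ 1) • θ (φ (F (k - 1))) :=
    LinearMap.congr_fun h (F (k - 1))
  have hχ : χ k = χ 1 * χ (k - 1) := by rw [← AddChar.map_add_eq_mul, add_sub_cancel]
  simp only [Module.End.mul_apply, LinearMap.smul_apply, Pi.smul_apply, weightedOp_apply,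
    shiftOp_apply, map_smul, hk, smul_smul, hχ]
  ring_nf

theorem map_pow_apply_of_comp_eq_smul {φ : Module.End ℂ A} {γ : A →ₐ[ℂ] A} {c : ℂ}
    (h : ∀ f, φ (γ f) = c • γ (φ f)) (k : ℕ) (f : A) : φ ((γ ^ k) f) = c ^ k • (γ ^ k) (φ f) := by
  induction k with
  | zero => simp
  | succ k ih =>
    rw [pow_succ', AlgHom.mul_apply, h, ih, map_smul, smul_smul, ← pow_succ', AlgHom.mul_apply]

theorem pow_map_pow_apply_of_comp_eq_smul {φ : Module.End ℂ A} {γ : A →ₐ[ℂ] A} {c : ℂ}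
    (h : ∀ f, φ (γ f) = c • γ (φ f)) (j k : ℕ) (f : A) :
    (φ ^ j) ((γ ^ k) f) = (c ^ k) ^ j • (γ ^ k) ((φ ^ j) f) := by
  induction j with
  | zero => simp only [pow_zero, Module.End.one_apply, one_smul]
  | succ j ih =>
    rw [pow_succ', Module.End.mul_apply, ih, map_smul, map_pow_apply_of_comp_eq_smul h, smul_smul,
      ← pow_succ, Module.End.mul_apply]

variable [NeZero n] {γ σ : A →ₐ[ℂ] A}

theorem crossedMul_assoc (hγ : γ ^ n = 1) (F G H : ZMod n → A) :
    crossedMul γ (crossedMul γ F G) H = crossedMul γ F (crossedMul γ G H) := by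
  funext m
  simp only [crossedMul_apply, Finset.sum_mul, Finset.mul_sum, map_sum, map_mul]
  rw [Finset.sum_comm]
  refine Finset.sum_congr rfl fun a _ => ?_
  rw [← Equiv.sum_comp (Equiv.addLeft a)]
  refine Finset.sum_congr rfl fun b _ => ?_
  simp only [Equiv.coe_addLeft, add_sub_cancel_left, pow_val_add hγ, AlgHom.mul_apply, mul_assoc,
    sub_sub]

theorem weightedOp_crossedMul (χ : AddChar (ZMod n) ℂ) {D : Module.End ℂ A}
    (hD : ∀ f g, D (f * g) = D f * σ g + f * D g) {c : ℂ} (hDγ : ∀ f, D (γ f) = c • γ (D f))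
    (hσγ : Commute σ γ) (hχ : ∀ k, χ k * c ^ k.val = 1) (F G : ZMod n → A) :
    weightedOp χ D (crossedMul γ F G) =
      crossedMul γ (weightedOp χ D F) (weightedOp χ σ.toLinearMap G) +
        crossedMul γ F (weightedOp χ D G) := by
  funext m
  simp only [weightedOp_apply, crossedMul_apply, Pi.add_apply, map_sum, Finset.smul_sum,
    ← Finset.sum_add_distrib]
  refine Finset.sum_congr rfl fun k _ => ?_
  have hσ : σ ((γ ^ k.val) (G (m - k))) = (γ ^ k.val) (σ (G (m - k))) :=
    DFunLike.congr_fun (hσγ.pow_right k.val).eq _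
  have hm : χ m = χ k * χ (m - k) := by rw [← AddChar.map_add_eq_mul, add_sub_cancel]
  have hmc : χ m * c ^ k.val = χ (m - k) := by rw [hm, mul_right_comm, hχ, one_mul]
  rw [hD, hσ, map_pow_apply_of_comp_eq_smul hDγ, smul_add, mul_smul_comm, smul_smul, hmc, hm]
  simp only [AlgHom.toLinearMap_apply, map_smul, smul_mul_assoc, mul_smul_comm, smul_smul,
    mul_comm (χ (m - k))]

theorem shiftOp_crossedMul (hγ : γ ^ n = 1) (χ : AddChar (ZMod n) ℂ) {φ : Module.End ℂ A}
    (hφ : ∀ f g, φ (f * g) = φ f * γ g + σ f * φ g) {c : ℂ} (hφγ : ∀ f, φ (γ f) = c • γ (φ f))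
    (hχ : ∀ k, χ k = c ^ k.val) (F G : ZMod n → A) :
    shiftOp n φ (crossedMul γ F G) =
      crossedMul γ (shiftOp n φ F) G +
        crossedMul γ (weightedOp χ σ.toLinearMap F) (shiftOp n φ G) := by
  funext m
  have hreindex : crossedMul γ (shiftOp n φ F) G m =
      ∑ k, φ (F k) * γ ((γ ^ k.val) (G (m - 1 - k))) := by
    rw [crossedMul_apply, ← Equiv.sum_comp (Equiv.addLeft 1)]
    refine Finset.sum_congr rfl fun k _ => ?_
    have hγ1 : γ ^ (1 : ZMod n).val = γ := by simpa using pow_val_natCast hγ 1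
    simp only [shiftOp_apply, Equiv.coe_addLeft, add_sub_cancel_left, pow_val_add hγ, hγ1,
      AlgHom.mul_apply, sub_sub]
  rw [Pi.add_apply, hreindex]
  simp only [shiftOp_apply, weightedOp_apply, crossedMul_apply, map_sum, hφ,
    Finset.sum_add_distrib, map_pow_apply_of_comp_eq_smul hφγ, hχ, AlgHom.toLinearMap_apply,
    smul_mul_assoc, mul_smul_comm, sub_right_comm m]

end CrossedProduct

section DifferenceOperators

open Polynomial

theorem polyZW_ext {f g : PolyZW} (h : ∀ a b, (f.coeff a).coeff b = (g.coeff a).coeff b) :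
    f = g :=
  Polynomial.ext fun a => Polynomial.ext fun b => h a b

theorem coeff_coeff_smul (c : ℂ) (f : PolyZW) (a b : ℕ) :
    ((c • f).coeff a).coeff b = c * (f.coeff a).coeff b := by
  simp only [coeff_smul, smul_eq_mul]

theorem coeff_sum_C_mul_X_pow {R : Type*} [Semiring R] {φ : R → R} (hφ : φ 0 = 0) (p : R[X])
    (a : ℕ) : (p.sum fun k r => C (φ r) * X ^ k).coeff a = φ (p.coeff a) := by
  rw [sum_def, finsetSum_coeff]
  simp only [coeff_C_mul_X_pow, Finset.sum_ite_eq]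
  split_ifs with ha
  · rfl
  · rw [notMem_support_iff.mp ha, hφ]

variable (q : ℂ) (f g : PolyZW)

theorem coeff_coeff_sigmaOp (a b : ℕ) :
    ((sigmaOp q f).coeff a).coeff b = q ^ a * (f.coeff a).coeff b := by
  rw [sigmaOp, comp_C_mul_X_coeff, ← C_pow, mul_comm, coeff_C_mul]

theorem coeff_coeff_tauOp (a b : ℕ) :
    ((tauOp q f).coeff a).coeff b = q⁻¹ ^ b * (f.coeff a).coeff b := by
  rw [tauOp, coeff_sum_C_mul_X_pow (φ := (comp · (C q⁻¹ * X))) zero_comp,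
    comp_C_mul_X_coeff, mul_comm]

theorem coeff_coeff_Dz (a b : ℕ) :
    ((Dz q f).coeff a).coeff b =
      (1 - q)⁻¹ * ((1 - q ^ (a + 1)) * (f.coeff (a + 1)).coeff b) := by
  rw [Dz, coeff_C_mul, coeff_C_mul, coeff_divX, coeff_sub, coeff_sub, coeff_coeff_sigmaOp,
    one_sub_mul]

theorem coeff_coeff_Dw (a b : ℕ) :
    ((Dw q f).coeff a).coeff b =
      (1 - q⁻¹)⁻¹ * ((1 - q⁻¹ ^ (b + 1)) * (f.coeff a).coeff (b + 1)) := by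
  rw [Dw, coeff_sum_C_mul_X_pow (φ := fun p => C (1 - q⁻¹)⁻¹ * p.divX) (by simp), coeff_C_mul,
    coeff_divX, coeff_sub, coeff_sub, coeff_coeff_tauOp, one_sub_mul]

theorem sigmaOp_tauOp : sigmaOp q (tauOp q f) = tauOp q (sigmaOp q f) :=
  polyZW_ext fun a b => by simp only [coeff_coeff_sigmaOp, coeff_coeff_tauOp]; ring

theorem Dz_sigmaOp : Dz q (sigmaOp q f) = q • sigmaOp q (Dz q f) :=
  polyZW_ext fun a b => by simp only [coeff_coeff_smul, coeff_coeff_sigmaOp, coeff_coeff_Dz]; ring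

theorem Dz_tauOp : Dz q (tauOp q f) = tauOp q (Dz q f) :=
  polyZW_ext fun a b => by simp only [coeff_coeff_tauOp, coeff_coeff_Dz]; ring

theorem Dw_sigmaOp : Dw q (sigmaOp q f) = sigmaOp q (Dw q f) :=
  polyZW_ext fun a b => by simp only [coeff_coeff_sigmaOp, coeff_coeff_Dw]; ring

theorem Dw_tauOp : Dw q (tauOp q f) = q⁻¹ • tauOp q (Dw q f) :=
  polyZW_ext fun a b => by simp only [coeff_coeff_smul, coeff_coeff_tauOp, coeff_coeff_Dw]; ring

theorem Dz_Dw : Dz q (Dw q f) = Dw q (Dz q f) :=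
  polyZW_ext fun a b => by simp only [coeff_coeff_Dz, coeff_coeff_Dw]; ring

theorem Dz_gammaOp : Dz q (gammaOp q f) = q • gammaOp q (Dz q f) := by
  rw [gammaOp, Dz_sigmaOp, Dz_tauOp, gammaOp]

theorem X_mul_Dz : X * Dz q f = (1 - q)⁻¹ • (f - sigmaOp q f) := by
  refine polyZW_ext fun a b => ?_
  rw [coeff_coeff_smul, coeff_sub, coeff_sub, coeff_coeff_sigmaOp]
  cases a with
  | zero => simp
  | succ a => rw [coeff_X_mul, coeff_coeff_Dz, one_sub_mul]

theorem C_X_mul_Dw : C X * Dw q f = (1 - q⁻¹)⁻¹ • (f - tauOp q f) := by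
  refine polyZW_ext fun a b => ?_
  rw [coeff_coeff_smul, coeff_sub, coeff_sub, coeff_coeff_tauOp, coeff_C_mul]
  cases b with
  | zero => simp
  | succ b => rw [coeff_X_mul, coeff_coeff_Dw, one_sub_mul]

theorem map_mul_of_mul_map_eq_smul_sub {A : Type*} [CommRing A] [Algebra ℂ A] {x : A}
    (hx : IsLeftRegular x) {c : ℂ} {σ D : A → A} (hσ : ∀ f g, σ (f * g) = σ f * σ g)
    (hD : ∀ f, x * D f = c • (f - σ f)) (f g : A) : D (f * g) = D f * σ g + f * D g := by
  refine hx ?_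
  calc x * D (f * g) = c • (f * g - σ f * σ g) := by rw [hD, hσ]
    _ = c • (f - σ f) * σ g + f * c • (g - σ g) := by
      rw [smul_mul_assoc, mul_smul_comm, ← smul_add]
      ring_nf
    _ = x * (D f * σ g + f * D g) := by
      rw [← hD, ← hD]
      ring

theorem iterate_eq_zero_of_one_sub_pow_mul {R M : Type*} [CommRing R] {n : ℕ} [NeZero n] {c v : R}
    (hv : v ^ n = 1) {T : M → M} {φ : M → ℕ → R}
    (hT : ∀ f a, φ (T f) a = c * ((1 - v ^ (a + 1)) * φ f (a + 1))) (f : M) (a : ℕ) :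
    φ (T^[n] f) a = 0 := by
  have hiter (m : ℕ) (f : M) :
      φ (T^[m] f) a = (∏ i ∈ Finset.range m, c * (1 - v ^ (a + i + 1))) * φ f (a + m) := by
    induction m generalizing f with
    | zero => simp
    | succ m ih =>
      rw [Function.iterate_succ_apply, ih, hT, Finset.prod_range_succ]
      ring_nf
  have hlt : a % n < n := Nat.mod_lt a (NeZero.pos n)
  have hdvd : n ∣ a + (n - 1 - a % n) + 1 :=
    ⟨a / n + 1, by rw [mul_add_one]; have := Nat.div_add_mod a n; omega⟩
  have hfactor : c * (1 - v ^ (a + (n - 1 - a % n) + 1)) = 0 := by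
    obtain ⟨k, hk⟩ := hdvd
    rw [hk, pow_mul, hv, one_pow, sub_self, mul_zero]
  rw [hiter, Finset.prod_eq_zero (Finset.mem_range.mpr (by omega)) hfactor, zero_mul]

/-- `σ` as an algebra homomorphism. -/
def sigmaHom : PolyZW →ₐ[ℂ] PolyZW := (aeval (C (C q) * X)).restrictScalars ℂ

/-- `τ` as an algebra homomorphism. -/
def tauHom : PolyZW →ₐ[ℂ] PolyZW := mapAlgHom (aeval (C q⁻¹ * X))

/-- `γ` as an algebra homomorphism. -/
def gammaHom : PolyZW →ₐ[ℂ] PolyZW := sigmaHom q * tauHom q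

/-- `D_z` as a linear operator. -/
def dzEnd : Module.End ℂ PolyZW where
  toFun := Dz q
  map_add' f g := polyZW_ext fun a b => by simp only [coeff_coeff_Dz, coeff_add]; ring
  map_smul' c f := polyZW_ext fun a b => by
    simp only [coeff_coeff_Dz, coeff_coeff_smul, RingHom.id_apply]; ring

/-- `D_w` as a linear operator. -/
def dwEnd : Module.End ℂ PolyZW where
  toFun := Dw q
  map_add' f g := polyZW_ext fun a b => by simp only [coeff_coeff_Dw, coeff_add]; ring
  map_smul' c f := polyZW_ext fun a b => by
    simp only [coeff_coeff_Dw, coeff_coeff_smul, RingHom.id_apply]; ring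

/-- The operator `σ ∘ D_w`; it is a skew derivation for the pair `(γ, σ)`. -/
def sigmaDwEnd : Module.End ℂ PolyZW := (sigmaHom q).toLinearMap * dwEnd q

theorem coe_sigmaHom : ⇑(sigmaHom q) = sigmaOp q := rfl

theorem coe_tauHom : ⇑(tauHom q) = tauOp q := by
  funext f
  refine polyZW_ext fun a b => ?_
  rw [tauHom, coeff_coeff_tauOp, coe_mapAlgHom, coeff_map]
  change (comp _ _).coeff b = _
  rw [comp_C_mul_X_coeff, mul_comm]

theorem coe_gammaHom : ⇑(gammaHom q) = gammaOp q := by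
  funext f
  rw [gammaHom, AlgHom.mul_apply, coe_sigmaHom, coe_tauHom, gammaOp]

theorem dzEnd_apply : dzEnd q f = Dz q f := rfl

theorem sigmaDwEnd_apply : sigmaDwEnd q f = sigmaOp q (Dw q f) := rfl

theorem sigmaDwEnd_gammaOp : sigmaDwEnd q (gammaOp q f) = q⁻¹ • gammaOp q (sigmaDwEnd q f) := by
  rw [sigmaDwEnd_apply, gammaOp, Dw_sigmaOp, Dw_tauOp, ← coe_sigmaHom, map_smul, map_smul,
    coe_sigmaHom, sigmaOp_tauOp, sigmaDwEnd_apply, gammaOp]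

theorem commute_sigmaHom_tauHom : Commute (sigmaHom q) (tauHom q) :=
  AlgHom.ext fun f => by
    simp only [AlgHom.mul_apply, coe_sigmaHom, coe_tauHom, sigmaOp_tauOp]

theorem commute_sigmaHom_gammaHom : Commute (sigmaHom q) (gammaHom q) :=
  (Commute.refl _).mul_right (commute_sigmaHom_tauHom q)

theorem dzEnd_mul : dzEnd q (f * g) = dzEnd q f * sigmaHom q g + f * dzEnd q g :=
  map_mul_of_mul_map_eq_smul_sub isRegular_X.left (map_mul (sigmaHom q)) (X_mul_Dz q) f g

theorem Dw_mul : Dw q (f * g) = Dw q f * tauOp q g + f * Dw q g := by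
  have hX : IsLeftRegular (C X : PolyZW) := (IsRegular.of_ne_zero (C_ne_zero.mpr X_ne_zero)).left
  exact map_mul_of_mul_map_eq_smul_sub hX (coe_tauHom q ▸ map_mul (tauHom q)) (C_X_mul_Dw q) f g

theorem sigmaDwEnd_mul :
    sigmaDwEnd q (f * g) = sigmaDwEnd q f * gammaHom q g + sigmaHom q f * sigmaDwEnd q g := by
  simp only [sigmaDwEnd_apply, Dw_mul, ← coe_sigmaHom, map_add, map_mul, coe_gammaHom, gammaOp]

theorem commute_sigmaHom_dwEnd : Commute (sigmaHom q).toLinearMap (dwEnd q) :=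
  LinearMap.ext fun f => (Dw_sigmaOp q f).symm

theorem sigmaDwEnd_pow_apply (j : ℕ) : (sigmaDwEnd q ^ j) f = (sigmaOp q)^[j] ((Dw q)^[j] f) := by
  rw [sigmaDwEnd, (commute_sigmaHom_dwEnd q).mul_pow, Module.End.mul_apply, Module.End.pow_apply,
    Module.End.pow_apply]
  rfl

variable {q} {n : ℕ}

theorem gammaHom_pow_eq_one (hq : q ^ n = 1) : gammaHom q ^ n = 1 := by
  refine AlgHom.ext fun f => polyZW_ext fun a b => ?_
  have hpow (m : ℕ) :
      (((gammaHom q ^ m) f).coeff a).coeff b =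
        (q ^ m) ^ a * ((q ^ m)⁻¹ ^ b * (f.coeff a).coeff b) := by
    induction m with
    | zero => simp
    | succ m ih =>
      rw [pow_succ', AlgHom.mul_apply, coe_gammaHom, gammaOp, coeff_coeff_sigmaOp,
        coeff_coeff_tauOp, ih, pow_succ, mul_inv]
      ring
  rw [hpow, hq, inv_one, one_pow, one_pow, one_mul, one_mul, AlgHom.one_apply]

theorem dzEnd_pow_eq_zero [NeZero n] (hq : q ^ n = 1) : dzEnd q ^ n = 0 :=
  LinearMap.ext fun f => polyZW_ext fun a b => by
    rw [Module.End.pow_apply]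
    exact iterate_eq_zero_of_one_sub_pow_mul (φ := fun f a => (f.coeff a).coeff b) hq
      (fun f a => coeff_coeff_Dz q f a b) f a

theorem dwEnd_pow_eq_zero [NeZero n] (hq : q ^ n = 1) : dwEnd q ^ n = 0 :=
  LinearMap.ext fun f => polyZW_ext fun a b => by
    rw [Module.End.pow_apply]
    exact iterate_eq_zero_of_one_sub_pow_mul (φ := fun f b => (f.coeff a).coeff b)
      (inv_pow_eq_one_of_pow_eq_one hq) (fun f b => coeff_coeff_Dw q f a b) f b

theorem sigmaDwEnd_pow_eq_zero [NeZero n] (hq : q ^ n = 1) : sigmaDwEnd q ^ n = 0 := by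
  rw [sigmaDwEnd, (commute_sigmaHom_dwEnd q).mul_pow, dwEnd_pow_eq_zero hq, mul_zero]

end DifferenceOperators

section StarProduct

variable {n : ℕ} [NeZero n] {q : ℂ}

/-- The character `k ↦ q⁻ᵏ` of `ℤ/nℤ` for an `n`-th root of unity `q`. -/
def invRootChar (hq : q ^ n = 1) : AddChar (ZMod n) ℂ :=
  AddChar.zmodChar n (inv_pow_eq_one_of_pow_eq_one hq)

theorem invRootChar_apply (hq : q ^ n = 1) (k : ZMod n) : invRootChar hq k = q⁻¹ ^ k.val :=
  AddChar.zmodChar_apply _ k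

theorem invRootChar_one (hq : q ^ n = 1) : invRootChar hq 1 = q⁻¹ := by
  simpa [invRootChar_apply] using pow_val_natCast (inv_pow_eq_one_of_pow_eq_one hq) 1

/-- The operator acting on the first factor of the star product: `(iℏ/2) D_z`, weighted by `q⁻ᵏ` on
the component at `γ^k` to account for `D_w ∘ γ^k = q⁻ᵏ γ^k ∘ D_w` on the second factor. -/
def starLeftOp (hq : q ^ n = 1) (hbar : ℂ) : Module.End ℂ (ZMod n → PolyZW) :=
  weightedOp (invRootChar hq) ((Complex.I * hbar / 2) • dzEnd q)

/-- The operator acting on the second factor of the star product: `σ ∘ D_w`, raising the power of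
`γ` by one. -/
def starRightOp (n : ℕ) (q : ℂ) : Module.End ℂ (ZMod n → PolyZW) := shiftOp n (sigmaDwEnd q)

theorem sum_range_natCast_zmod {M : Type*} [AddCommMonoid M] (T : ℕ → ZMod n → M) :
    ∑ k ∈ Finset.range n, T k k = ∑ k : ZMod n, T k.val k := by
  refine Finset.sum_bij' (fun k _ => (k : ZMod n)) (fun k _ => k.val) ?_ ?_ ?_ ?_ ?_
  · exact fun _ _ => Finset.mem_univ _
  · exact fun k _ => Finset.mem_range.mpr k.val_lt
  · exact fun k hk => ZMod.val_cast_of_lt (Finset.mem_range.mp hk)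
  · exact fun k _ => ZMod.natCast_zmod_val k
  · exact fun k hk => by rw [ZMod.val_cast_of_lt (Finset.mem_range.mp hk)]

theorem qstar_eq_twistedMul (hq : q ^ n = 1) (hbar : ℂ) (F G : ZMod n → PolyZW) :
    qstar n hbar q F G =
      twistedMul q n (crossedMul (gammaHom q)) (starLeftOp hq hbar) (starRightOp n q) F G := by
  funext m
  rw [twistedMul_apply, Finset.sum_apply]
  refine Finset.sum_congr rfl fun j _ => ?_
  rw [sum_range_natCast_zmod fun k l => ((Complex.I * hbar / 2) ^ j / qfact q j) •
    ((Dz q)^[j] (F l) * (sigmaOp q)^[j] ((Dw q)^[j] ((gammaOp q)^[k] (G (m - l - j))))),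
    Pi.smul_apply, crossedMul_apply, Finset.smul_sum]
  refine Finset.sum_congr rfl fun k _ => ?_
  have hmove : (sigmaOp q)^[j] ((Dw q)^[j] ((gammaOp q)^[k.val] (G (m - k - j)))) =
      (q⁻¹ ^ k.val) ^ j • (gammaHom q ^ k.val) ((sigmaDwEnd q ^ j) (G (m - k - j))) := by
    rw [← coe_gammaHom, ← AlgHom.coe_pow, ← sigmaDwEnd_pow_apply,
      pow_map_pow_apply_of_comp_eq_smul (coe_gammaHom q ▸ sigmaDwEnd_gammaOp q)]
  have hDz : (dzEnd q ^ j) (F k) = (Dz q)^[j] (F k) := Module.End.pow_apply _ _ _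
  rw [hmove, starLeftOp, starRightOp, weightedOp_pow_apply, shiftOp_pow_apply, smul_pow,
    LinearMap.smul_apply, hDz, invRootChar_apply]
  simp only [smul_mul_assoc, mul_smul_comm, smul_smul]
  ring_nf

theorem starLeftOp_crossedMul (hq : q ^ n = 1) (hbar : ℂ) (F G : ZMod n → PolyZW) :
    starLeftOp hq hbar (crossedMul (gammaHom q) F G) =
      crossedMul (gammaHom q) (starLeftOp hq hbar F)
          (weightedOp (invRootChar hq) (sigmaHom q).toLinearMap G) +
        crossedMul (gammaHom q) F (starLeftOp hq hbar G) := by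
  refine weightedOp_crossedMul _ (c := q) (fun f g => ?_) (fun f => ?_)
    (commute_sigmaHom_gammaHom q) (fun k => ?_) F G
  · simp only [LinearMap.smul_apply, dzEnd_mul, smul_add, smul_mul_assoc, mul_smul_comm]
  · have hf : dzEnd q (gammaHom q f) = q • gammaHom q (dzEnd q f) := by
      rw [coe_gammaHom, dzEnd_apply, Dz_gammaOp, dzEnd_apply]
    simp only [LinearMap.smul_apply, hf, map_smul, smul_comm q]
  · have hq0 : q ≠ 0 := (IsUnit.of_pow_eq_one hq (NeZero.ne n)).ne_zero
    rw [invRootChar_apply, ← mul_pow, inv_mul_cancel₀ hq0, one_pow]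

theorem starRightOp_crossedMul (hq : q ^ n = 1) (F G : ZMod n → PolyZW) :
    starRightOp n q (crossedMul (gammaHom q) F G) =
      crossedMul (gammaHom q) (starRightOp n q F) G +
        crossedMul (gammaHom q) (weightedOp (invRootChar hq) (sigmaHom q).toLinearMap F)
          (starRightOp n q G) :=
  shiftOp_crossedMul (gammaHom_pow_eq_one hq) _ (sigmaDwEnd_mul q)
    (coe_gammaHom q ▸ sigmaDwEnd_gammaOp q) (invRootChar_apply hq) F G

theorem starLeftOp_mul_weightedOp_sigmaHom (hq : q ^ n = 1) (hbar : ℂ) :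
    starLeftOp hq hbar * weightedOp (invRootChar hq) (sigmaHom q).toLinearMap =
      q • (weightedOp (invRootChar hq) (sigmaHom q).toLinearMap * starLeftOp hq hbar) := by
  refine weightedOp_mul_weightedOp _ (LinearMap.ext fun f => ?_)
  have hf : dzEnd q (sigmaHom q f) = q • sigmaHom q (dzEnd q f) := Dz_sigmaOp q f
  simp only [Module.End.mul_apply, LinearMap.smul_apply, AlgHom.toLinearMap_apply, hf, map_smul,
    smul_comm q]

theorem starRightOp_mul_weightedOp_sigmaHom (hq : q ^ n = 1) :
    starRightOp n q * weightedOp (invRootChar hq) (sigmaHom q).toLinearMap =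
      q • (weightedOp (invRootChar hq) (sigmaHom q).toLinearMap * starRightOp n q) := by
  have hq0 : q ≠ 0 := (IsUnit.of_pow_eq_one hq (NeZero.ne n)).ne_zero
  refine shiftOp_mul_weightedOp _ ?_
  rw [invRootChar_one, mul_inv_cancel₀ hq0, one_smul]
  exact LinearMap.ext fun f => congrArg (sigmaOp q) (Dw_sigmaOp q f)

theorem commute_starLeftOp_starRightOp (hq : q ^ n = 1) (hbar : ℂ) :
    Commute (starLeftOp hq hbar) (starRightOp n q) := by
  have hq0 : q ≠ 0 := (IsUnit.of_pow_eq_one hq (NeZero.ne n)).ne_zero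
  refine Commute.symm ((shiftOp_mul_weightedOp _ (LinearMap.ext fun f => ?_)).trans (one_smul ℂ _))
  have hf : sigmaDwEnd q (dzEnd q f) = q⁻¹ • dzEnd q (sigmaDwEnd q f) := by
    simp only [dzEnd_apply, sigmaDwEnd_apply, Dz_sigmaOp, smul_smul, inv_mul_cancel₀ hq0, one_smul,
      Dz_Dw]
  simp only [Module.End.mul_apply, LinearMap.smul_apply, invRootChar_one, one_mul, map_smul, hf,
    smul_comm q⁻¹]

theorem starLeftOp_pow_eq_zero (hq : q ^ n = 1) (hbar : ℂ) : starLeftOp hq hbar ^ n = 0 := by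
  refine LinearMap.ext fun F => funext fun k => ?_
  rw [starLeftOp, weightedOp_pow_apply, smul_pow, dzEnd_pow_eq_zero hq, smul_zero,
    LinearMap.zero_apply, smul_zero, LinearMap.zero_apply, Pi.zero_apply]

theorem starRightOp_pow_eq_zero (hq : q ^ n = 1) : starRightOp n q ^ n = 0 := by
  refine LinearMap.ext fun F => funext fun k => ?_
  rw [starRightOp, shiftOp_pow_apply, sigmaDwEnd_pow_eq_zero hq]
  rfl

end StarProduct

theorem qstar_assoc_general {n : ℕ} [NeZero n] {q : ℂ} (hq : IsPrimitiveRoot q n) (hbar : ℂ)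
    (F G H : ZMod n → PolyZW) :
    qstar n hbar q (qstar n hbar q F G) H = qstar n hbar q F (qstar n hbar q G H) := by
  have hqn : q ^ n = 1 := hq.pow_eq_one
  simp only [qstar_eq_twistedMul hqn]
  exact twistedMul_assoc (crossedMul_assoc (gammaHom_pow_eq_one hqn))
    (fun _ => qfact_ne_zero_of_isPrimitiveRoot hq)
    (starLeftOp_crossedMul hqn hbar) (starRightOp_crossedMul hqn)
    (starLeftOp_mul_weightedOp_sigmaHom hqn hbar) (starRightOp_mul_weightedOp_sigmaHom hqn)
    (commute_starLeftOp_starRightOp hqn hbar)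
    (starLeftOp_pow_eq_zero hqn hbar) (starRightOp_pow_eq_zero hqn) F G H

/-- For `n ≥ 2`, `q = exp(2πi/n)` and any `ℏ ∈ ℂ`, the star product `⋆` on functions
`ℤ/nℤ → ℂ[z,w]` is associative. -/
theorem qstar_assoc (n : ℕ) (hn : 2 ≤ n) (q : ℂ)
    (hq : q = Complex.exp (2 * Real.pi * Complex.I / n)) (hbar : ℂ)
    (F G H : ZMod n → PolyZW) :
    qstar n hbar q (qstar n hbar q F G) H = qstar n hbar q F (qstar n hbar q G H) := by
  have : NeZero n := ⟨by omega⟩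
  exact qstar_assoc_general (hq ▸ Complex.isPrimitiveRoot_exp n (NeZero.ne n)) hbar F G H
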